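/- Let F be an infinite field, let n ≥ 3 be an integer, and let w₁, w₂, w₃ be nontrivial words. Then every element of the quotient group PSL_n(F) := SL_n(F)/Z(SL_n(F)) is a product g₁g₂g₃ with g₁ ∈ w₁(PSL_n(F)), g₂ ∈ w₂(PSL_n(F)), and g₃ ∈ w₃(PSL_n(F)). -/

import Mathlib

/-- The set of `w`-values in the group `G`: the image of the word map `w : G^d → G`. -/
def wordValues {d : ℕ} (w : FreeGroup (Fin d)) (G : Type*) [Group G] : Set G :=
  Set.range fun g : Fin d → G => FreeGroup.lift g w

/-- `PSL_n(F) = SL_n(F) / Z(SL_n(F))`. -/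
abbrev PSL (n : ℕ) (F : Type*) [Field F] :=
  Matrix.SpecialLinearGroup (Fin n) F ⧸ Subgroup.center (Matrix.SpecialLinearGroup (Fin n) F)

/-!
Scalar matrices are trivial in `PSL_n(F)`. A nonscalar `g ∈ SL_n(F)` is conjugate to a matrix with
a block LDU factorization whose diagonal blocks are nonscalar `2 × 2` matrices of determinant one,
preceded in the last step by a single entry `1` when `n` is odd: a first pivot can be given any
value `s ≠ 0` without making the remainder scalar, and pivots `s, s⁻¹` with `s² ≠ 1` make up
a `2 × 2` block.

In `SL₂(F)` a nontrivial word takes values of infinitely many traces, and every nonscalar matrix of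
determinant one is a product of three such matrices of prescribed traces. Each diagonal block is
thus a product `x y z` of word values, and the traces can be chosen so that the factors `x` of
different blocks have disjoint spectra, and likewise the factors `z`. By the theorem of Sylvester
the lower triangular matrix with diagonal blocks `x` that absorbs `L`, and the upper triangular one
with diagonal blocks `z` that absorbs `U`, are then conjugate to block diagonal matrices, hence are
word values.
-/

open Matrix Polynomial
open scoped Pointwise

section WordValues

variable {d : ℕ} {w : FreeGroup (Fin d)} {G H : Type*} [Group G] [Group H]

lemma map_mem_wordValues (φ : G →* H) {g : G} (hg : g ∈ wordValues w G) :
    φ g ∈ wordValues w H := by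
  obtain ⟨f, rfl⟩ := hg
  exact ⟨φ ∘ f, DFunLike.congr_fun (FreeGroup.ext_hom _ (φ.comp (FreeGroup.lift f)) (by simp)) w⟩

lemma one_mem_wordValues : (1 : G) ∈ wordValues w G :=
  map_mem_wordValues (1 : G →* G) ⟨1, rfl⟩

lemma prodMk_mem_wordValues {g : G} {h : H} (hg : g ∈ wordValues w G) (hh : h ∈ wordValues w H) :
    (g, h) ∈ wordValues w (G × H) := by
  obtain ⟨f, rfl⟩ := hg
  obtain ⟨f', rfl⟩ := hh
  exact ⟨fun i => (f i, f' i), DFunLike.congr_fun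
    (FreeGroup.ext_hom _ ((FreeGroup.lift f).prod (FreeGroup.lift f')) (by simp)) w⟩

end WordValues

section IsConj

lemma exists_isConj_mul_eq {M : Type*} [Monoid M] {a b c : M} (h : IsConj (a * b) c) :
    ∃ a' b', IsConj a a' ∧ IsConj b b' ∧ a' * b' = c := by
  obtain ⟨u, hu⟩ := h
  have hconj (x : M) : IsConj x (u * x * ↑u⁻¹) := ⟨u, by simp [SemiconjBy]⟩
  refine ⟨_, _, hconj a, hconj b, ?_⟩
  rw [← u.mul_inv_eq_iff_eq_mul.2 hu.eq]
  simp [mul_assoc]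

variable {ι κ R : Type*} [Fintype ι] [DecidableEq ι] [Fintype κ] [DecidableEq κ] [CommRing R]
  {A B : Matrix ι ι R}

lemma trace_eq_of_isConj (h : IsConj A B) : A.trace = B.trace := by
  obtain ⟨c, hc⟩ := h
  rw [← c.mul_inv_eq_iff_eq_mul.2 hc.eq, trace_units_conj]

lemma det_eq_of_isConj (h : IsConj A B) : A.det = B.det := by
  obtain ⟨c, hc⟩ := h
  rw [← c.mul_inv_eq_iff_eq_mul.2 hc.eq, det_units_conj]

lemma det_eq_of_charpoly_eq {M : Matrix ι ι R} {N : Matrix κ κ R} (h : M.charpoly = N.charpoly) :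
    M.det = N.det := by
  nontriviality R
  rw [det_eq_sign_charpoly_coeff, det_eq_sign_charpoly_coeff, ← charpoly_natDegree_eq_dim M,
    ← charpoly_natDegree_eq_dim N, h]

lemma exists_monoidHom_of_isConj {M N : Matrix ι ι R} (h : IsConj M N) :
    ∃ φ : Matrix ι ι R →* Matrix ι ι R, (∀ A, (φ A).charpoly = A.charpoly) ∧ φ M = N := by
  obtain ⟨c, hc⟩ := h
  refine ⟨MulDistribMulAction.toMonoidHom _ (ConjAct.toConjAct c), fun A => ?_,
    c.mul_inv_eq_iff_eq_mul.2 hc.eq⟩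
  exact (congrArg charpoly (by simp [ConjAct.units_smul_def])).trans (charpoly_units_conj c A)

end IsConj

section WordTrace

lemma exists_prod_map_vecMulVec_eq {α ι R : Type*} [Fintype ι] [DecidableEq ι] [CommRing R]
    [IsDomain R] {u v : α → ι → R} {s : α} {L : List α}
    (hL : (s :: L).IsChain fun a b => v a ⬝ᵥ u b ≠ 0) :
    ∃ c : R, c ≠ 0 ∧ ((s :: L).map fun a => vecMulVec (u a) (v a)).prod =
      c • vecMulVec (u s) (v ((s :: L).getLast (List.cons_ne_nil s L))) := by
  induction L generalizing s with
  | nil => exact ⟨1, one_ne_zero, by simp⟩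
  | cons r L ih =>
    rw [List.isChain_cons_cons] at hL
    obtain ⟨c, hc, h⟩ := ih hL.2
    refine ⟨c * (v s ⬝ᵥ u r), mul_ne_zero hc hL.1, ?_⟩
    rw [List.map_cons, List.prod_cons, h, mul_smul_comm, vecMulVec_mul_vecMulVec, vecMulVec_smul,
      smul_smul, List.getLast_cons_cons]

lemma trace_prod_map_vecMulVec_ne_zero {α ι R : Type*} [Fintype ι] [DecidableEq ι] [CommRing R]
    [IsDomain R] {u v : α → ι → R} {L : List α} (hne : L ≠ [])
    (hL : L.IsChain fun a b => v a ⬝ᵥ u b ≠ 0) (hcyc : v (L.getLast hne) ⬝ᵥ u (L.head hne) ≠ 0) :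
    (L.map fun a => vecMulVec (u a) (v a)).prod.trace ≠ 0 := by
  obtain ⟨s, L, rfl⟩ := List.exists_cons_of_ne_nil hne
  obtain ⟨c, hc, h⟩ := exists_prod_map_vecMulVec_eq hL
  rw [h, trace_smul, trace_vecMulVec, dotProduct_comm]
  exact mul_ne_zero hc hcyc

lemma exists_polynomial_eval_eq_trace_prod {α ι R : Type*} [Fintype ι] [DecidableEq ι]
    [CommRing R] (A B : α → Matrix ι ι R) (L : List α) :
    ∃ Q : R[X], ∀ t, Q.eval t = (L.map fun a => A a + t ^ 2 • B a).prod.trace := by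
  refine ⟨(L.map fun a => (A a).map C + (X ^ 2 : R[X]) • (B a).map C).prod.trace, fun t => ?_⟩
  rw [← coe_evalRingHom, AddMonoidHom.map_trace, ← RingHom.mapMatrix_apply, map_list_prod,
    List.map_map]
  congr 3
  ext a i j
  simp [mul_comm (t ^ 2)]

lemma infinite_image_eval_div_pow {F : Type*} [Field F] [Infinite F] {Q : F[X]} {k : ℕ}
    (hQ : Q.eval 0 ≠ 0) (hk : k ≠ 0) : ((fun t => Q.eval t / t ^ k) '' {0}ᶜ).Infinite := by
  intro hfin
  have hfiber : ∀ c, {t | t ≠ 0 ∧ Q.eval t / t ^ k = c}.Finite := fun c => by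
    have hne : Q - C c * X ^ k ≠ 0 := fun h => hQ (by simpa [hk] using congrArg (eval 0) h)
    refine (Q - C c * X ^ k).rootSet_finite F |>.subset fun t ⟨ht, hc⟩ => ?_
    have : Q.eval t = c * t ^ k := (div_eq_iff (pow_ne_zero k ht)).1 hc
    simp [mem_rootSet, hne, this]
  refine (Set.finite_singleton (0 : F)).infinite_compl ?_
  refine (hfin.biUnion fun c _ => hfiber c).subset fun t ht => ?_
  exact Set.mem_biUnion (Set.mem_image_of_mem _ ht) ⟨ht, rfl⟩

variable {α F : Type*} [Field F]

/-- The projection of `F²` onto the line of slope `p s` along the line of slope `p s⁻¹`, where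
`s⁻¹ = (s.1, !s.2)` is the letter inverse to `s`. -/
def letterProj (p : α × Bool → F) (s : α × Bool) : Matrix (Fin 2) (Fin 2) F :=
  vecMulVec ((p s - p (s.1, !s.2))⁻¹ • ![1, p s]) ![-p (s.1, !s.2), 1]

/-- The matrix with eigenvalues `t⁻¹` and `t` on the lines of slopes `p s` and `p s⁻¹`. It
is substituted for the letter `s`. -/
def letterMatrix (p : α × Bool → F) (t : F) (s : α × Bool) : Matrix (Fin 2) (Fin 2) F :=
  t⁻¹ • letterProj p s + t • letterProj p (s.1, !s.2)

variable {p : α × Bool → F} {t : F}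

lemma apply_sub_apply_inv_ne_zero (hp : p.Injective) (s : α × Bool) :
    p s - p (s.1, !s.2) ≠ 0 :=
  sub_ne_zero.2 fun h => by simpa using congrArg Prod.snd (hp h)

lemma adjugate_letterProj (hp : p.Injective) (s : α × Bool) :
    (letterProj p s).adjugate = letterProj p (s.1, !s.2) := by
  have h := apply_sub_apply_inv_ne_zero hp s
  have h' : p (s.1, !s.2) - p s ≠ 0 := by rwa [← neg_ne_zero, neg_sub]
  ext i j
  fin_cases i <;> fin_cases j <;>
    simp [letterProj, adjugate_fin_two, vecMulVec_apply] <;> field_simp <;> ring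

lemma det_letterMatrix (hp : p.Injective) (ht : t ≠ 0) (s : α × Bool) :
    (letterMatrix p t s).det = 1 := by
  have h := apply_sub_apply_inv_ne_zero hp s
  have h' : p (s.1, !s.2) - p s ≠ 0 := by rwa [← neg_ne_zero, neg_sub]
  simp only [letterMatrix, letterProj, det_fin_two, Fin.isValue, Matrix.add_apply,
    Matrix.smul_apply, vecMulVec_apply, Pi.smul_apply, smul_eq_mul, cons_val_zero, cons_val_one,
    cons_val_fin_one, Bool.not_not, Prod.mk.eta, mul_one]
  field_simp
  ring

lemma adjugate_letterMatrix (hp : p.Injective) (s : α × Bool) :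
    (letterMatrix p t s).adjugate = letterMatrix p t (s.1, !s.2) := by
  have hadd (A B : Matrix (Fin 2) (Fin 2) F) : (A + B).adjugate = A.adjugate + B.adjugate := by
    simp [adjugate_fin_two, add_comm]
  simp [letterMatrix, hadd, adjugate_smul, adjugate_letterProj hp]

/-- `letterMatrix p t` at the generators, as elements of `SL₂`. -/
def generatorMatrix (hp : p.Injective) (ht : t ≠ 0) (i : α) : SpecialLinearGroup (Fin 2) F :=
  ⟨letterMatrix p t (i, true), det_letterMatrix hp ht _⟩

lemma coe_lift_generatorMatrix_mk (hp : p.Injective) (ht : t ≠ 0) (L : List (α × Bool)) :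
    (FreeGroup.lift (generatorMatrix hp ht) (FreeGroup.mk L) : Matrix (Fin 2) (Fin 2) F) =
      (L.map (letterMatrix p t)).prod := by
  rw [FreeGroup.lift_mk, ← SpecialLinearGroup.coeMonoidHom_apply, map_list_prod, List.map_map]
  congr 2
  ext1 ⟨i, b⟩
  cases b
  · exact (Matrix.SpecialLinearGroup.coe_inv (generatorMatrix hp ht i)).trans
      (adjugate_letterMatrix hp (i, true))
  · rfl

lemma pow_length_smul_prod_map_letterMatrix (ht : t ≠ 0) (L : List (α × Bool)) :
    t ^ L.length • (L.map (letterMatrix p t)).prod =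
      (L.map fun s => letterProj p s + t ^ 2 • letterProj p (s.1, !s.2)).prod := by
  induction L with
  | nil => simp
  | cons s L ih =>
    have hs : letterProj p s + t ^ 2 • letterProj p (s.1, !s.2) = t • letterMatrix p t s := by
      simp [letterMatrix, smul_smul, ht, sq]
    rw [List.map_cons, List.map_cons, List.prod_cons, List.prod_cons, ← ih, hs, List.length_cons,
      pow_succ', smul_mul_smul_comm]

lemma trace_prod_map_letterProj_ne_zero (hp : p.Injective) {L : List (α × Bool)} (hne : L ≠ [])
    (hL : FreeGroup.IsCyclicallyReduced L) : (L.map (letterProj p)).prod.trace ≠ 0 := by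
  have key (a b : α × Bool) (hab : a.1 = b.1 → a.2 = b.2) :
      ![-p (a.1, !a.2), 1] ⬝ᵥ ((p b - p (b.1, !b.2))⁻¹ • ![1, p b]) ≠ 0 := by
    rw [dotProduct_smul, smul_eq_mul]
    refine mul_ne_zero (inv_ne_zero (apply_sub_apply_inv_ne_zero hp b)) ?_
    have hba : p b - p (a.1, !a.2) ≠ 0 := sub_ne_zero.2 fun h => by
      obtain rfl := hp h
      simp at hab
    simpa [neg_add_eq_sub] using hba
  refine trace_prod_map_vecMulVec_ne_zero hne (hL.isReduced.imp key) (key _ _ ?_)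
  exact hL.2 _ (List.getLast?_eq_getLast_of_ne_nil hne) _ (List.head?_eq_some_head hne)

lemma exists_isCyclicallyReduced_isConj {w : FreeGroup α} (hw : w ≠ 1) :
    ∃ L ≠ [], FreeGroup.IsCyclicallyReduced L ∧ IsConj (FreeGroup.mk L) w := by
  classical
  have hw' := FreeGroup.reduceCyclically.conj_conjugator_reduceCyclically w.toWord
  have hconj : IsConj (FreeGroup.mk (FreeGroup.reduceCyclically w.toWord)) w := by
    refine isConj_iff.2 ⟨FreeGroup.mk (FreeGroup.reduceCyclically.conjugator w.toWord), ?_⟩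
    rw [FreeGroup.inv_mk, FreeGroup.mul_mk, FreeGroup.mul_mk, hw', FreeGroup.mk_toWord]
  refine ⟨_, fun hnil => hw ?_, FreeGroup.reduceCyclically.isCyclicallyReduced
    FreeGroup.isReduced_toWord, hconj⟩
  rwa [hnil, ← FreeGroup.one_eq_mk, isConj_one_right] at hconj

/-- The trace of a nontrivial cyclically reduced word in the matrices `letterMatrix p t` is
a nonconstant rational function of `t`. -/
lemma infinite_trace_wordValues [Infinite F] {d : ℕ} {w : FreeGroup (Fin d)} (hw : w ≠ 1) :
    ((fun g : SpecialLinearGroup (Fin 2) F => (g : Matrix (Fin 2) (Fin 2) F).trace) ''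
      wordValues w (SpecialLinearGroup (Fin 2) F)).Infinite := by
  obtain ⟨p, hp⟩ : ∃ p : Fin d × Bool → F, p.Injective :=
    ⟨_, ((Finite.equivFin _).toEmbedding.trans
      (Fin.valEmbedding.trans (Infinite.natEmbedding F))).injective⟩
  obtain ⟨L, hne, hL, hconj⟩ := exists_isCyclicallyReduced_isConj hw
  obtain ⟨Q, hQ⟩ := exists_polynomial_eval_eq_trace_prod (letterProj p)
    (fun s => letterProj p (s.1, !s.2)) L
  have hQ0 : Q.eval 0 ≠ 0 := by
    simpa [hQ] using trace_prod_map_letterProj_ne_zero hp hne hL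
  refine (infinite_image_eval_div_pow hQ0 (List.length_pos_of_ne_nil hne).ne').mono ?_
  rintro _ ⟨t, ht : t ≠ 0, rfl⟩
  have htrace := trace_eq_of_isConj ((SpecialLinearGroup.coeMonoidHom.comp
    (FreeGroup.lift (generatorMatrix hp ht))).map_isConj hconj)
  refine ⟨_, ⟨generatorMatrix hp ht, rfl⟩, htrace.symm.trans ?_⟩
  rw [eq_div_iff (pow_ne_zero _ ht), hQ, ← pow_length_smul_prod_map_letterMatrix ht,
    ← coe_lift_generatorMatrix_mk hp ht, trace_smul, smul_eq_mul, mul_comm]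
  rfl

end WordTrace

section Sylvester

variable {m n F : Type*} [Fintype m] [DecidableEq m] [Fintype n] [DecidableEq n]

lemma aeval_mul_eq_mul_aeval {R : Type*} [CommRing R] {A : Matrix m m R} {B : Matrix n n R}
    {S : Matrix m n R} (h : A * S = S * B) (q : R[X]) : aeval A q * S = S * aeval B q := by
  induction q using Polynomial.induction_on' with
  | add p q hp hq => simp only [map_add, Matrix.add_mul, Matrix.mul_add, hp, hq]
  | monomial k a =>
    have hpow : A ^ k * S = S * B ^ k := by
      induction k with
      | zero => simp
      | succ k ih => rw [pow_succ, Matrix.mul_assoc, h, ← Matrix.mul_assoc, ih, Matrix.mul_assoc,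
          pow_succ]
    simp [aeval_monomial, Algebra.algebraMap_eq_smul_one, hpow]

variable [Field F] {A : Matrix m m F} {B : Matrix n n F}

lemma eq_zero_of_mul_eq_mul_of_isCoprime_charpoly (hAB : IsCoprime A.charpoly B.charpoly)
    {S : Matrix m n F} (h : A * S = S * B) : S = 0 := by
  obtain ⟨u, v, huv⟩ := hAB
  have key : aeval A (u * A.charpoly + v * B.charpoly) * S = 0 := by
    rw [map_add, map_mul, map_mul, aeval_self_charpoly, mul_zero, zero_add, Matrix.mul_assoc,
      aeval_mul_eq_mul_aeval h, aeval_self_charpoly, Matrix.mul_zero, Matrix.mul_zero]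
  simpa [huv] using key

lemma exists_mul_sub_mul_eq (hAB : IsCoprime A.charpoly B.charpoly) (C : Matrix m n F) :
    ∃ S : Matrix m n F, A * S - S * B = C := by
  let f : Matrix m n F →ₗ[F] Matrix m n F := mulLeftLinearMap n F A - mulRightLinearMap m F B
  have hf : Function.Injective f := (injective_iff_map_eq_zero f).2 fun S hS =>
    eq_zero_of_mul_eq_mul_of_isCoprime_charpoly hAB (sub_eq_zero.1 hS)
  exact LinearMap.injective_iff_surjective.1 hf C

lemma isConj_fromBlocks_zero₂₁ (hAB : IsCoprime A.charpoly B.charpoly) (C : Matrix m n F) :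
    IsConj (fromBlocks A 0 0 B) (fromBlocks A C 0 B) := by
  obtain ⟨S, rfl⟩ := exists_mul_sub_mul_eq hAB C
  refine ⟨⟨fromBlocks 1 (-S) 0 1, fromBlocks 1 S 0 1, ?_, ?_⟩, ?_⟩ <;>
    simp [fromBlocks_multiply, SemiconjBy, ← fromBlocks_one, sub_eq_neg_add]

lemma isConj_fromBlocks_zero₁₂ (hAB : IsCoprime A.charpoly B.charpoly) (C : Matrix n m F) :
    IsConj (fromBlocks A 0 0 B) (fromBlocks A 0 C B) := by
  obtain ⟨S, rfl⟩ := exists_mul_sub_mul_eq hAB.symm C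
  refine ⟨⟨fromBlocks 1 0 (-S) 1, fromBlocks 1 0 S 1, ?_, ?_⟩, ?_⟩ <;>
    simp [fromBlocks_multiply, SemiconjBy, ← fromBlocks_one, sub_eq_neg_add]

end Sylvester

section CoprimeWordMatrices

variable {R : Type*} [CommRing R] {d : ℕ} {w : FreeGroup (Fin d)} {p q : R[X]}
  {ι κ : Type*} [Fintype ι] [DecidableEq ι] [Fintype κ] [DecidableEq κ]

/-- The `w`-values on `SL(ι, R)`, regarded as matrices, whose characteristic polynomial is coprime
to `p`. The polynomial `p` keeps the spectrum away from that of the blocks already split off, so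
that the Sylvester equation stays solvable. -/
def coprimeWordMatrices (w : FreeGroup (Fin d)) (p : R[X]) (ι : Type*) [Fintype ι]
    [DecidableEq ι] : Set (Matrix ι ι R) :=
  {M | (∃ g ∈ wordValues w (SpecialLinearGroup ι R), (g : Matrix ι ι R) = M) ∧
    IsCoprime M.charpoly p}

lemma exists_mem_wordValues_coe_eq {G : Type*} [Group G] (φ : G →* Matrix ι ι R)
    (hφ : ∀ g, (φ g).det = 1) {g : G} (hg : g ∈ wordValues w G) :
    ∃ M ∈ wordValues w (SpecialLinearGroup ι R), (M : Matrix ι ι R) = φ g := by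
  let ψ : G →* SpecialLinearGroup ι R :=
    { toFun := fun g => ⟨φ g, hφ g⟩
      map_one' := Subtype.ext φ.map_one
      map_mul' := fun a b => Subtype.ext (φ.map_mul a b) }
  exact ⟨ψ g, map_mem_wordValues ψ hg, rfl⟩

lemma map_mem_coprimeWordMatrices (φ : Matrix ι ι R →* Matrix κ κ R)
    (hφ : ∀ M, (φ M).charpoly = M.charpoly) {M : Matrix ι ι R}
    (hM : M ∈ coprimeWordMatrices w p ι) : φ M ∈ coprimeWordMatrices w p κ := by
  obtain ⟨⟨g, hg, rfl⟩, hp⟩ := hM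
  refine ⟨exists_mem_wordValues_coe_eq (φ.comp SpecialLinearGroup.coeMonoidHom) (fun g => ?_) hg,
    (hφ _).symm ▸ hp⟩
  exact (det_eq_of_charpoly_eq (hφ _)).trans g.det_coe

lemma mem_coprimeWordMatrices_of_isConj {M N : Matrix ι ι R}
    (hM : M ∈ coprimeWordMatrices w p ι) (hMN : IsConj M N) : N ∈ coprimeWordMatrices w p ι := by
  obtain ⟨φ, hφ, rfl⟩ := exists_monoidHom_of_isConj hMN
  exact map_mem_coprimeWordMatrices φ hφ hM

lemma one_mem_coprimeWordMatrices (hp : IsCoprime (X - 1) p) :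
    1 ∈ coprimeWordMatrices w p ι :=
  ⟨⟨1, one_mem_wordValues, rfl⟩, by rw [charpoly_one]; exact hp.pow_left⟩

lemma coprimeWordMatrices_mul_right_subset :
    coprimeWordMatrices w (p * q) ι ⊆ coprimeWordMatrices w p ι := fun _ hM =>
  ⟨hM.1, hM.2.of_mul_right_left⟩

lemma fromBlocks_mem_coprimeWordMatrices {M : Matrix ι ι R} {N : Matrix κ κ R}
    (hM : M ∈ coprimeWordMatrices w p ι) (hN : N ∈ coprimeWordMatrices w p κ) :
    fromBlocks M 0 0 N ∈ coprimeWordMatrices w p (ι ⊕ κ) := by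
  obtain ⟨⟨g, hg, rfl⟩, hgp⟩ := hM
  obtain ⟨⟨h, hh, rfl⟩, hhp⟩ := hN
  let φ : SpecialLinearGroup ι R × SpecialLinearGroup κ R →* Matrix (ι ⊕ κ) (ι ⊕ κ) R :=
    { toFun := fun x => fromBlocks x.1 0 0 x.2
      map_one' := fromBlocks_one
      map_mul' := fun x y => by simp [fromBlocks_multiply] }
  refine ⟨exists_mem_wordValues_coe_eq φ (fun x => ?_) (prodMk_mem_wordValues hg hh), ?_⟩
  · exact (det_fromBlocks_zero₂₁ _ _ _).trans (by simp)
  · rw [charpoly_fromBlocks_zero₂₁]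
    exact hgp.mul_left hhp

variable {d₁ d₂ d₃ : ℕ} {w₁ : FreeGroup (Fin d₁)} {w₂ : FreeGroup (Fin d₂)}
  {w₃ : FreeGroup (Fin d₃)}

/-- The products `x * y * z` of values of three words with characteristic polynomials coprime
to `p`. -/
def coprimeWordProducts (w₁ : FreeGroup (Fin d₁)) (w₂ : FreeGroup (Fin d₂))
    (w₃ : FreeGroup (Fin d₃)) (p : R[X]) (ι : Type*) [Fintype ι] [DecidableEq ι] :
    Set (Matrix ι ι R) :=
  coprimeWordMatrices w₁ p ι * coprimeWordMatrices w₂ p ι * coprimeWordMatrices w₃ p ι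

lemma mul_mul_mem_coprimeWordProducts {x y z : Matrix ι ι R}
    (hx : x ∈ coprimeWordMatrices w₁ p ι) (hy : y ∈ coprimeWordMatrices w₂ p ι)
    (hz : z ∈ coprimeWordMatrices w₃ p ι) : x * y * z ∈ coprimeWordProducts w₁ w₂ w₃ p ι :=
  Set.mul_mem_mul (Set.mul_mem_mul hx hy) hz

lemma mem_coprimeWordProducts_of_isConj {M N : Matrix ι ι R}
    (hM : M ∈ coprimeWordProducts w₁ w₂ w₃ p ι) (hMN : IsConj M N) :
    N ∈ coprimeWordProducts w₁ w₂ w₃ p ι := by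
  obtain ⟨_, ⟨x, hx, y, hy, rfl⟩, z, hz, rfl⟩ := hM
  obtain ⟨_, z', hxy, hzz', rfl⟩ := exists_isConj_mul_eq hMN
  obtain ⟨x', y', hxx', hyy', rfl⟩ := exists_isConj_mul_eq hxy
  exact mul_mul_mem_coprimeWordProducts (mem_coprimeWordMatrices_of_isConj hx hxx')
    (mem_coprimeWordMatrices_of_isConj hy hyy') (mem_coprimeWordMatrices_of_isConj hz hzz')

lemma mem_coprimeWordProducts_of_reindex {M : Matrix ι ι R} (e : ι ≃ κ)
    (hM : reindex e e M ∈ coprimeWordProducts w₁ w₂ w₃ p κ) :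
    M ∈ coprimeWordProducts w₁ w₂ w₃ p ι := by
  let φ := reindexAlgEquiv R R e.symm
  have hφ {d : ℕ} {w : FreeGroup (Fin d)} {N : Matrix κ κ R} (hN : N ∈ coprimeWordMatrices w p κ) :
      φ N ∈ coprimeWordMatrices w p ι :=
    map_mem_coprimeWordMatrices φ.toMulEquiv.toMonoidHom (charpoly_reindex e.symm) hN
  obtain ⟨_, ⟨x, hx, y, hy, rfl⟩, z, hz, hxyz⟩ := hM
  have hM : φ x * φ y * φ z = M := by
    rw [← map_mul, ← map_mul]
    exact (congrArg φ hxyz).trans ((reindex e e).symm_apply_apply M)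
  exact hM ▸ mul_mul_mem_coprimeWordProducts (hφ hx) (hφ hy) (hφ hz)

end CoprimeWordMatrices

section BlockLDU

variable {k l m R : Type*} [CommRing R] [Fintype k] [Fintype l]

/-- The matrix with block LDU factorization `[1 0; c 1] * [a 0; 0 e] * [1 b; 0 1]`. -/
def blockLDU (a : Matrix l l R) (c : Matrix m l R) (b : Matrix l m R) (e : Matrix m m R) :
    Matrix (l ⊕ m) (l ⊕ m) R :=
  fromBlocks a (a * b) (c * a) (c * a * b + e)

lemma reindex_blockLDU_blockLDU (a : Matrix k k R) (c : Matrix (l ⊕ m) k R)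
    (b : Matrix k (l ⊕ m) R) (a' : Matrix l l R) (c' : Matrix m l R) (b' : Matrix l m R)
    (e : Matrix m m R) :
    ∃ c₁ b₁ c₂ b₂, reindex (Equiv.sumAssoc k l m).symm (Equiv.sumAssoc k l m).symm
      (blockLDU a c b (blockLDU a' c' b' e)) = blockLDU (blockLDU a c₁ b₁ a') c₂ b₂ e := by
  obtain ⟨c₁, c₂, rfl⟩ : ∃ c₁ c₂, c = fromRows c₁ c₂ := ⟨_, _, (fromRows_toRows c).symm⟩
  obtain ⟨b₁, b₂, rfl⟩ : ∃ b₁ b₂, b = fromCols b₁ b₂ := ⟨_, _, (fromCols_toCols b).symm⟩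
  refine ⟨c₁, b₁, fromCols (c₂ - c' * c₁) c', fromRows (b₂ - b₁ * b') b', ?_⟩
  have hL : fromCols (c₂ - c' * c₁) c' * blockLDU a c₁ b₁ a' =
      fromCols (c₂ * a) (c₂ * a * b₁ + c' * a') := by
    simp [blockLDU, fromCols_mul_fromBlocks, Matrix.sub_mul, Matrix.mul_add, Matrix.mul_assoc,
      ← add_assoc]
  have hU : blockLDU a c₁ b₁ a' * fromRows (b₂ - b₁ * b') b' =
      fromRows (a * b₂) (c₁ * a * b₂ + a' * b') := by
    simp [blockLDU, fromBlocks_mul_fromRows, Matrix.mul_sub, Matrix.add_mul, Matrix.mul_assoc,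
      ← add_assoc]
  have hLU : fromCols (c₂ - c' * c₁) c' * blockLDU a c₁ b₁ a' * fromRows (b₂ - b₁ * b') b' =
      c₂ * a * b₂ + c' * a' * b' := by
    simp [hL, fromCols_mul_fromRows, Matrix.mul_sub, Matrix.add_mul, Matrix.mul_assoc,
      ← add_assoc]
  rw [blockLDU.eq_def (blockLDU a c₁ b₁ a'), hLU, hU, hL]
  ext ((i | i) | i) ((j | j) | j) <;> simp [blockLDU, add_assoc]

variable [DecidableEq l] [Fintype m] [DecidableEq m]

lemma blockLDU_eq_mul (a : Matrix l l R) (c : Matrix m l R) (b : Matrix l m R)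
    (e : Matrix m m R) :
    blockLDU a c b e = fromBlocks 1 0 c 1 * fromBlocks a 0 0 e * fromBlocks 1 b 0 1 := by
  simp [blockLDU, fromBlocks_multiply]

lemma det_blockLDU (a : Matrix l l R) (c : Matrix m l R) (b : Matrix l m R) (e : Matrix m m R) :
    (blockLDU a c b e).det = a.det * e.det := by
  simp [blockLDU_eq_mul]

lemma exists_isConj_blockLDU {e e' : Matrix m m R} (h : IsConj e e') (a : Matrix l l R)
    (c : Matrix m l R) (b : Matrix l m R) :
    ∃ c' b', IsConj (blockLDU a c b e) (blockLDU a c' b' e') := by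
  obtain ⟨u, hu⟩ := h
  refine ⟨u.1 * c, b * u⁻¹.1, ⟨fromBlocks 1 0 0 u.1, fromBlocks 1 0 0 u⁻¹.1, ?_, ?_⟩, ?_⟩
  · simp [fromBlocks_multiply]
  · simp [fromBlocks_multiply]
  · simp [SemiconjBy, blockLDU, fromBlocks_multiply, Matrix.mul_assoc, Matrix.mul_add,
      Matrix.add_mul, hu.eq]

variable {F : Type*} [Field F] {p : F[X]} {d₁ d₂ d₃ : ℕ} {w₁ : FreeGroup (Fin d₁)}
  {w₂ : FreeGroup (Fin d₂)} {w₃ : FreeGroup (Fin d₃)}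

lemma blockLDU_mem_coprimeWordProducts {x y z : Matrix l l F}
    (hx : x ∈ coprimeWordMatrices w₁ p l) (hy : y ∈ coprimeWordMatrices w₂ p l)
    (hz : z ∈ coprimeWordMatrices w₃ p l) (c : Matrix m l F) (b : Matrix l m F)
    {e : Matrix m m F}
    (he : e ∈ coprimeWordProducts w₁ w₂ w₃ (p * (x.charpoly * z.charpoly)) m) :
    blockLDU (x * y * z) c b e ∈ coprimeWordProducts w₁ w₂ w₃ p (l ⊕ m) := by
  obtain ⟨_, ⟨x', hx', y', hy', rfl⟩, z', hz', rfl⟩ := he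
  have hX : fromBlocks x 0 (c * x) x' ∈ coprimeWordMatrices w₁ p (l ⊕ m) :=
    mem_coprimeWordMatrices_of_isConj
      (fromBlocks_mem_coprimeWordMatrices hx (coprimeWordMatrices_mul_right_subset hx'))
      (isConj_fromBlocks_zero₁₂ hx'.2.of_mul_right_right.of_mul_right_left.symm _)
  have hY : fromBlocks y 0 0 y' ∈ coprimeWordMatrices w₂ p (l ⊕ m) :=
    fromBlocks_mem_coprimeWordMatrices hy (coprimeWordMatrices_mul_right_subset hy')
  have hZ : fromBlocks z (z * b) 0 z' ∈ coprimeWordMatrices w₃ p (l ⊕ m) :=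
    mem_coprimeWordMatrices_of_isConj
      (fromBlocks_mem_coprimeWordMatrices hz (coprimeWordMatrices_mul_right_subset hz'))
      (isConj_fromBlocks_zero₂₁ hz'.2.of_mul_right_right.of_mul_right_right.symm _)
  have hXYZ : blockLDU (x * y * z) c b (x' * y' * z') = fromBlocks x 0 (c * x) x' *
      fromBlocks y 0 0 y' * fromBlocks z (z * b) 0 z' := by
    simp [blockLDU, fromBlocks_multiply, Matrix.mul_assoc]
  exact hXYZ ▸ mul_mul_mem_coprimeWordProducts hX hY hZ

end BlockLDU

section FinTwo

variable {F : Type*} [Field F] {A B M : Matrix (Fin 2) (Fin 2) F}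

lemma mem_range_scalar_fin_two :
    M ∈ Set.range (scalar (Fin 2)) ↔ M 0 1 = 0 ∧ M 1 0 = 0 ∧ M 0 0 = M 1 1 := by
  refine ⟨?_, fun ⟨h₀₁, h₁₀, h⟩ => ⟨M 0 0, ?_⟩⟩
  · rintro ⟨r, rfl⟩
    simp
  · ext i j
    fin_cases i <;> fin_cases j <;> simp [h₀₁, h₁₀, h]

lemma notMem_range_scalar_of_trace_sq_ne (h : M.trace ^ 2 ≠ 4 * M.det) :
    M ∉ Set.range (scalar (Fin 2)) := by
  rintro ⟨r, rfl⟩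
  rw [scalar_apply, trace_diagonal, det_diagonal, Fin.sum_univ_two, Fin.prod_univ_two] at h
  exact h (by ring)

lemma isConj_companion_fin_two (hM : M ∉ Set.range (scalar (Fin 2))) :
    IsConj !![0, -M.det; 1, M.trace] M := by
  obtain ⟨v, hv⟩ : ∃ v : Fin 2 → F, !![v 0, (M *ᵥ v) 0; v 1, (M *ᵥ v) 1].det ≠ 0 := by
    contrapose! hM
    have h₀ := hM ![1, 0]
    have h₁ := hM ![0, 1]
    have h₂ := hM ![1, 1]
    simp only [Fin.isValue, cons_val_zero, mulVec, dotProduct, Fin.sum_univ_two, mul_one,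
      cons_val_one, cons_val_fin_one, mul_zero, add_zero, det_fin_two, of_apply, cons_val',
      one_mul, sub_zero, zero_add, zero_mul, zero_sub, neg_eq_zero] at h₀ h₁ h₂
    exact mem_range_scalar_fin_two.2 ⟨h₁, h₀, by linear_combination h₀ - h₁ - h₂⟩
  refine ⟨GeneralLinearGroup.mkOfDetNeZero _ hv, ?_⟩
  ext i j
  fin_cases i <;> fin_cases j <;>
    simp [mulVec, dotProduct, Fin.sum_univ_two, det_fin_two, trace_fin_two,
      GeneralLinearGroup.mkOfDetNeZero, Matrix.mul_apply] <;> ring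

lemma isConj_fin_two (hA : A ∉ Set.range (scalar (Fin 2))) (hB : B ∉ Set.range (scalar (Fin 2)))
    (htr : A.trace = B.trace) (hdet : A.det = B.det) : IsConj A B := by
  have h := isConj_companion_fin_two hA
  rw [htr, hdet] at h
  exact h.symm.trans (isConj_companion_fin_two hB)

lemma isConj_fin_two_of_det_eq_one (hA : A.det = 1) (hB : B.det = 1) (htr : A.trace = B.trace)
    (h4 : B.trace ^ 2 ≠ 4) : IsConj A B := by
  refine isConj_fin_two (notMem_range_scalar_of_trace_sq_ne ?_)
    (notMem_range_scalar_of_trace_sq_ne ?_) htr (hA.trans hB.symm)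
  · rwa [hA, htr, mul_one]
  · rwa [hB, mul_one]

lemma exists_mul_eq_fin_two (hB : B.det = 1) {s : F} (hs₀ : s ≠ 0) (hs : s ^ 2 ≠ 1)
    (htr : B.trace = s + s⁻¹) (x y : F) :
    ∃ X Y, X * Y = B ∧ (X.det = 1 ∧ X.trace = x) ∧ Y.det = 1 ∧ Y.trace = y := by
  have h4 : B.trace ^ 2 ≠ 4 := by
    intro h
    rw [htr] at h
    field_simp at h
    exact hs (sub_eq_zero.1 (pow_eq_zero_iff two_ne_zero |>.1 (by linear_combination h)))
  have hconj : IsConj (!![0, -1; 1, x] * !![y, s⁻¹; -s, 0]) B :=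
    isConj_fin_two_of_det_eq_one (by simp [hs₀]) hB (by simp [htr, trace_fin_two]) h4
  obtain ⟨X, Y, hX, hY, rfl⟩ := exists_isConj_mul_eq hconj
  refine ⟨X, Y, rfl, ?_⟩
  rw [← det_eq_of_isConj hX, ← det_eq_of_isConj hY, ← trace_eq_of_isConj hX,
    ← trace_eq_of_isConj hY]
  simp [trace_fin_two, det_fin_two, hs₀]

lemma exists_ne_zero_sq_ne_one (F : Type*) [Field F] [Infinite F] :
    ∃ s : F, s ≠ 0 ∧ s ^ 2 ≠ 1 := by
  obtain ⟨s, hs⟩ := (Set.toFinite {(0 : F), 1, -1}).infinite_compl.nonempty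
  simp only [Set.mem_compl_iff, Set.mem_insert_iff, Set.mem_singleton_iff, not_or] at hs
  exact ⟨s, hs.1, sq_ne_one_iff.2 hs.2⟩

lemma exists_mul_mul_eq_companion [Infinite F] (τ x y z : F) :
    ∃ X Y Z, X * Y * Z = !![0, -1; 1, τ] ∧ (X.det = 1 ∧ X.trace = x) ∧
      (Y.det = 1 ∧ Y.trace = y) ∧ Z.det = 1 ∧ Z.trace = z := by
  obtain ⟨s, hs₀, hs⟩ := exists_ne_zero_sq_ne_one F
  obtain ⟨X, Y, hXY, hX, hY⟩ := exists_mul_eq_fin_two (B := !![s, 0; z - s * τ, s⁻¹])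
    (by simp [hs₀]) hs₀ hs (by simp [trace_fin_two]) x y
  refine ⟨X, Y, !![0, -s⁻¹; s, z], ?_, hX, hY, by simp [hs₀], by simp [trace_fin_two]⟩
  rw [hXY]
  have hτ : -((z - s * τ) * s⁻¹) + s⁻¹ * z = τ := by
    field_simp
    ring
  simp [hs₀, hτ]

lemma finite_setOf_not_isCoprime {p : F[X]} (hp : p ≠ 0) :
    {t : F | ¬ IsCoprime (X ^ 2 - C t * X + 1) p}.Finite := by
  let K := AlgebraicClosure F
  refine (((p.rootSet_finite K).image fun α => α + α⁻¹).preimage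
    (algebraMap F K).injective.injOn).subset fun t ht => ?_
  obtain ⟨α, hα, hpα⟩ : ∃ α : K, aeval α (X ^ 2 - C t * X + 1) = 0 ∧ aeval α p = 0 := by
    simpa [isCoprime_iff_aeval_ne_zero_of_isAlgClosed F K] using ht
  have hα₀ : α ≠ 0 := by
    rintro rfl
    simp at hα
  refine ⟨α, (mem_rootSet_of_ne hp).2 hpα, mul_right_cancel₀ hα₀ ?_⟩
  simp only [map_add, aeval_sub, map_pow, aeval_X, map_mul, aeval_C, map_one, add_mul,
    inv_mul_cancel₀ hα₀] at hα ⊢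
  linear_combination hα

end FinTwo

section FinTwoWords

variable {F : Type*} [Field F] [Infinite F] {p : F[X]}

lemma exists_trace_forall_mem_coprimeWordMatrices {d : ℕ} {w : FreeGroup (Fin d)} (hw : w ≠ 1)
    (hp : p ≠ 0) : ∃ t, ∀ M : Matrix (Fin 2) (Fin 2) F, M.det = 1 → M.trace = t →
      M ∈ coprimeWordMatrices w p (Fin 2) := by
  have hfin : {t : F | t ^ 2 = 4}.Finite :=
    (Set.toFinite {2, -2}).subset fun t (ht : t ^ 2 = 4) =>
      sq_eq_sq_iff_eq_or_eq_neg.1 (ht.trans (by norm_num))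
  obtain ⟨_, ⟨g, hg, rfl⟩, ht⟩ :=
    (infinite_trace_wordValues hw).exists_notMem_finite (hfin.union (finite_setOf_not_isCoprime hp))
  simp only [Set.mem_union, Set.mem_ofPred_eq, not_or, not_not] at ht
  refine ⟨_, fun M hdet htr => mem_coprimeWordMatrices_of_isConj ⟨⟨g, hg, rfl⟩, ?_⟩
    (isConj_fin_two_of_det_eq_one g.det_coe hdet htr.symm (htr ▸ ht.1))⟩
  rw [charpoly_fin_two, g.det_coe, C_1]
  exact ht.2

variable {d₁ d₂ d₃ : ℕ} {w₁ : FreeGroup (Fin d₁)} {w₂ : FreeGroup (Fin d₂)}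
  {w₃ : FreeGroup (Fin d₃)}

lemma mem_coprimeWordProducts_fin_two (hw₁ : w₁ ≠ 1) (hw₂ : w₂ ≠ 1) (hw₃ : w₃ ≠ 1) (hp : p ≠ 0)
    {a : Matrix (Fin 2) (Fin 2) F} (hdet : a.det = 1) (ha : a ∉ Set.range (scalar (Fin 2))) :
    a ∈ coprimeWordProducts w₁ w₂ w₃ p (Fin 2) := by
  obtain ⟨x, hx⟩ := exists_trace_forall_mem_coprimeWordMatrices hw₁ hp
  obtain ⟨y, hy⟩ := exists_trace_forall_mem_coprimeWordMatrices hw₂ hp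
  obtain ⟨z, hz⟩ := exists_trace_forall_mem_coprimeWordMatrices hw₃ hp
  obtain ⟨X, Y, Z, hXYZ, ⟨hX, hXx⟩, ⟨hY, hYy⟩, hZ, hZz⟩ :=
    exists_mul_mul_eq_companion a.trace x y z
  refine mem_coprimeWordProducts_of_isConj ?_ (isConj_companion_fin_two ha)
  rw [hdet, ← hXYZ]
  exact mul_mul_mem_coprimeWordProducts (hx X hX hXx) (hy Y hY hYy) (hz Z hZ hZz)

end FinTwoWords

section Pivot

variable {ι κ R : Type*} [Fintype ι] [DecidableEq ι] [Fintype κ] [DecidableEq κ] [CommRing R]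

lemma reindex_mem_range_scalar_iff (e : ι ≃ κ) {M : Matrix ι ι R} :
    reindex e e M ∈ Set.range (scalar κ) ↔ M ∈ Set.range (scalar ι) := by
  refine exists_congr fun r => ?_
  rw [← (reindex e e).injective.eq_iff]
  simp [diagonal_apply, Function.comp_def, ← Matrix.ext_iff]

lemma mem_range_scalar_of_subsingleton [Subsingleton ι] (M : Matrix ι ι R) :
    M ∈ Set.range (scalar ι) :=
  mem_range_scalar_of_commute_single fun i j hij => absurd (Subsingleton.elim i j) hij

lemma isConj_reindex (σ : Equiv.Perm ι) (M : Matrix ι ι R) : IsConj M (reindex σ σ M) := by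
  refine ⟨permMatrixHom.toHomUnits σ, ?_⟩
  change (σ⁻¹).permMatrix R * M = reindex σ σ M * (σ⁻¹).permMatrix R
  rw [PEquiv.toMatrix_toPEquiv_mul, PEquiv.mul_toMatrix_toPEquiv]
  ext i j
  exact congrArg _ (σ.symm_apply_apply j).symm

lemma exists_isConj_apply_ne_zero {M : Matrix ι ι R} (hM : M ∉ Set.range (scalar ι)) :
    ∃ N, IsConj M N ∧ ∃ i j, i ≠ j ∧ N i j ≠ 0 := by
  contrapose! hM
  have hoff : ∀ i j, i ≠ j → M i j = 0 := hM M (IsConj.refl M)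
  have hdiag : ∀ i j, i ≠ j → M j j = M i i := fun i j hij => by
    let u : (Matrix ι ι R)ˣ := ⟨transvection i j 1, transvection i j (-1),
      by simp [transvection_mul_transvection_same, hij],
      by simp [transvection_mul_transvection_same, hij]⟩
    have h := hM (u.1 * M * u⁻¹.1) ⟨u, by simp [SemiconjBy]⟩ i j hij
    simpa [u, hoff, hij, hij.symm, ← sub_eq_add_neg, sub_eq_zero] using h
  cases isEmpty_or_nonempty ι with
  | inl _ => exact mem_range_scalar_of_subsingleton M
  | inr h =>
    obtain ⟨i₀⟩ := h
    refine ⟨M i₀ i₀, ?_⟩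
    ext i j
    obtain rfl | hij := eq_or_ne i j
    · obtain rfl | hi := eq_or_ne i i₀
      · simp
      · simp [hdiag i i₀ hi]
    · simp [hij, hoff i j hij]

lemma exists_isConj_apply_ne_zero_of_row {M : Matrix ι ι R} (hM : M ∉ Set.range (scalar ι))
    (i₀ : ι) : ∃ N, IsConj M N ∧ ∃ j ≠ i₀, N i₀ j ≠ 0 := by
  obtain ⟨N, hN, i, j, hij, hne⟩ := exists_isConj_apply_ne_zero hM
  refine ⟨_, hN.trans (isConj_reindex (Equiv.swap i i₀) N), Equiv.swap i i₀ j, ?_, by simpa⟩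
  rw [Ne, Equiv.swap_apply_eq_iff, Equiv.swap_apply_right]
  exact hij.symm

variable {l m F : Type*} [Fintype l] [Fintype m] [Field F]

lemma exists_ne_zero_mul_eq_zero [Nonempty l] (hlm : Fintype.card l < Fintype.card m)
    (b : Matrix l m F) : ∃ χ : Matrix m l F, χ ≠ 0 ∧ b * χ = 0 := by
  have h : LinearMap.ker (mulLeftLinearMap l F b) ≠ ⊥ := by
    refine LinearMap.ker_ne_bot_of_finrank_lt ?_
    simpa [Module.finrank_matrix] using Nat.mul_lt_mul_of_pos_right hlm Fintype.card_pos
  obtain ⟨χ, hχ, hχ0⟩ := Submodule.exists_mem_ne_zero_of_ne_bot h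
  exact ⟨χ, hχ0, hχ⟩

variable [DecidableEq l] [DecidableEq m] {a : Matrix l l F} {b : Matrix l m F}
  {c : Matrix m l F} {d : Matrix m m F} {s : F}

lemma isConj_fromBlocks_blockLDU (hs : s ≠ 0) {ψ : Matrix m l F} (hψ : a - b * ψ = s • 1) :
    IsConj (fromBlocks a b c d)
      (blockLDU (s • 1) (ψ + s⁻¹ • (c - d * ψ)) (s⁻¹ • b) (d - s⁻¹ • ((c - d * ψ) * b))) := by
  obtain rfl : a = s • 1 + b * ψ := by rw [← hψ, sub_add_cancel]
  refine ⟨⟨fromBlocks 1 0 ψ 1, fromBlocks 1 0 (-ψ) 1, ?_, ?_⟩, ?_⟩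
  · simp [fromBlocks_multiply]
  · simp [fromBlocks_multiply]
  · simp only [SemiconjBy, blockLDU, fromBlocks_multiply, one_mul, mul_one, Matrix.one_mul,
      Matrix.mul_one, Matrix.zero_mul, Matrix.mul_zero, zero_add, add_zero, smul_mul,
      Matrix.mul_smul, Matrix.mul_add, Matrix.add_mul, Matrix.mul_assoc, smul_add, smul_smul,
      mul_inv_cancel₀ hs, inv_mul_cancel₀ hs, one_smul, fromBlocks_inj, and_true, true_and,
      add_add_sub_cancel]
    abel

lemma exists_isConj_blockLDU_smul_one [Nonempty l] (hlm : Fintype.card l < Fintype.card m)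
    {β : Matrix m l F} (hβ : b * β = 1) (hdet : (fromBlocks a b c d).det ≠ 0) (hs : s ≠ 0) :
    ∃ c' b' e, e ∉ Set.range (scalar m) ∧
      IsConj (fromBlocks a b c d) (blockLDU (s • 1) c' b' e) := by
  -- Otherwise every admissible `ψ` leaves a scalar remainder; comparing two `ψ` that differ by `χ`
  -- with `b * χ = 0` forces that scalar to vanish.
  by_contra! hscalar
  have key (ψ : Matrix m l F) (hψ : b * ψ = a - s • 1) :
      ∃ t ≠ 0, d - s⁻¹ • ((c - d * ψ) * b) = scalar m t := by
    have hpivot : a - b * ψ = s • 1 := by rw [hψ, sub_sub_cancel]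
    have hconj := isConj_fromBlocks_blockLDU (c := c) (d := d) hs hpivot
    obtain ⟨t, ht⟩ : _ ∈ Set.range (scalar m) := by
      by_contra he
      exact hscalar _ _ _ he hconj
    refine ⟨t, ?_, ht.symm⟩
    rintro rfl
    rw [det_eq_of_isConj hconj, det_blockLDU, ← ht] at hdet
    have : Nonempty m := Fintype.card_pos_iff.1 (Nat.zero_lt_of_lt hlm)
    simp [det_zero] at hdet
  obtain ⟨χ, hχ₀, hχ⟩ := exists_ne_zero_mul_eq_zero hlm b
  obtain ⟨t, ht₀, ht⟩ := key (β * (a - s • 1)) (by rw [← Matrix.mul_assoc, hβ, Matrix.one_mul])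
  obtain ⟨t', -, ht'⟩ := key (β * (a - s • 1) + χ)
    (by rw [Matrix.mul_add, ← Matrix.mul_assoc, hβ, hχ, Matrix.one_mul, add_zero])
  have hdχ : d * χ = t • χ := by
    simpa [Matrix.sub_mul, Matrix.mul_assoc, hχ, ← smul_one_eq_diagonal] using congrArg (· * χ) ht
  have hdχ' : d * χ = t' • χ := by
    simpa [Matrix.sub_mul, Matrix.mul_assoc, hχ, ← smul_one_eq_diagonal] using congrArg (· * χ) ht'
  obtain rfl : t = t' := smul_left_injective F hχ₀ (hdχ.symm.trans hdχ')
  have hdχb : d * χ * b = 0 := by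
    simpa [Matrix.mul_add, Matrix.sub_mul, Matrix.add_mul, hs] using ht'.trans ht.symm
  have h : d * χ = 0 := by
    rw [← Matrix.mul_one (d * χ), ← hβ, ← Matrix.mul_assoc, hdχb, Matrix.zero_mul]
  rw [h, eq_comm, smul_eq_zero] at hdχ
  exact hdχ.elim ht₀ hχ₀

lemma exists_isConj_blockLDU_of_notMem_range_scalar (hm : 1 < Fintype.card m)
    {g : Matrix (Fin 1 ⊕ m) (Fin 1 ⊕ m) F} (hg : g ∉ Set.range (scalar (Fin 1 ⊕ m)))
    (hdet : g.det ≠ 0) (hs : s ≠ 0) :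
    ∃ c b e, e ∉ Set.range (scalar m) ∧ IsConj g (blockLDU (s • 1) c b e) := by
  obtain ⟨N, hN, j | j, hj, hne⟩ := exists_isConj_apply_ne_zero_of_row hg (Sum.inl 0)
  · exact absurd (congrArg Sum.inl (Subsingleton.elim j 0)) hj
  have hβ : N.toBlocks₁₂ * single j (0 : Fin 1) (N (Sum.inl 0) (Sum.inr j))⁻¹ = 1 := by
    ext i k
    obtain rfl := Subsingleton.elim i 0
    obtain rfl := Subsingleton.elim k 0
    simp [hne, toBlocks₁₂]
  rw [det_eq_of_isConj hN, ← fromBlocks_toBlocks N] at hdet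
  obtain ⟨c, b, e, he, h⟩ := exists_isConj_blockLDU_smul_one
    (by simpa using hm) hβ hdet hs
  rw [fromBlocks_toBlocks] at h
  exact ⟨c, b, e, he, hN.trans h⟩

lemma blockLDU_smul_one_notMem_range_scalar [Nonempty l] [Nonempty m] {s t : F} (hs : s ≠ 0)
    (hst : s ≠ t) (c : Matrix m l F) (b : Matrix l m F) :
    blockLDU (s • 1) c b (t • 1) ∉ Set.range (scalar (l ⊕ m)) := by
  rintro ⟨r, hr⟩
  rw [scalar_apply, ← smul_one_eq_diagonal, ← fromBlocks_one, fromBlocks_smul, blockLDU,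
    fromBlocks_inj] at hr
  obtain ⟨hrs, hb, -, hrt⟩ := hr
  obtain rfl : b = 0 := by simpa [hs, eq_comm] using hb
  rw [Matrix.mul_zero, zero_add] at hrt
  exact hst ((smul_left_injective F one_ne_zero hrs).symm.trans
    (smul_left_injective F one_ne_zero hrt))

lemma exists_isConj_reindex_eq_blockLDU [Infinite F] (hm : 1 < Fintype.card m)
    {g : Matrix (Fin 1 ⊕ (Fin 1 ⊕ m)) (Fin 1 ⊕ (Fin 1 ⊕ m)) F}
    (hg : g ∉ Set.range (scalar (Fin 1 ⊕ (Fin 1 ⊕ m)))) (hdet : g.det = 1) :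
    ∃ N, IsConj g N ∧ ∃ a c b e, (a.det = 1 ∧ a ∉ Set.range (scalar (Fin 1 ⊕ Fin 1))) ∧
      (e.det = 1 ∧ e ∉ Set.range (scalar m)) ∧
      reindex (Equiv.sumAssoc _ _ _).symm (Equiv.sumAssoc _ _ _).symm N = blockLDU a c b e := by
  have hm' : 1 < Fintype.card (Fin 1 ⊕ m) := by
    rw [Fintype.card_sum]
    lia
  obtain ⟨s, hs₀, hs⟩ := exists_ne_zero_sq_ne_one F
  obtain ⟨c, b, e, he, hge⟩ :=
    exists_isConj_blockLDU_of_notMem_range_scalar hm' hg (hdet ▸ one_ne_zero) hs₀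
  have hdet' : s * e.det = 1 := by
    simpa [det_eq_of_isConj hge, det_blockLDU] using hdet
  obtain ⟨c', b', e', he', hee'⟩ := exists_isConj_blockLDU_of_notMem_range_scalar hm he
    (right_ne_zero_of_mul_eq_one hdet') (inv_ne_zero hs₀)
  obtain ⟨c₀, b₀, hg'⟩ := exists_isConj_blockLDU hee' (s • 1) c b
  obtain ⟨c₁, b₁, c₂, b₂, hN⟩ := reindex_blockLDU_blockLDU (s • 1) c₀ b₀ (s⁻¹ • 1) c' b' e'
  refine ⟨_, hge.trans hg', _, c₂, b₂, e', ⟨?_, ?_⟩, ⟨?_, he'⟩, hN⟩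
  · simp [det_blockLDU, hs₀]
  · refine blockLDU_smul_one_notMem_range_scalar hs₀ (fun h => hs ?_) c₁ b₁
    rw [sq, mul_eq_one_iff_eq_inv₀ hs₀, ← h]
  · rw [det_eq_of_isConj hee', det_blockLDU] at hdet'
    simpa [hs₀] using hdet'

end Pivot

section Main

variable {F : Type*} [Field F] {p : F[X]}

lemma ne_zero_of_isCoprime_X_sub_one (hp : IsCoprime (X - 1) p) : p ≠ 0 := by
  rintro rfl
  exact not_isUnit_X_sub_C (1 : F) (isCoprime_zero_right.1 hp)

variable [Infinite F] {m : Type*} [Fintype m] [DecidableEq m] {d₁ d₂ d₃ : ℕ}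
  {w₁ : FreeGroup (Fin d₁)} {w₂ : FreeGroup (Fin d₂)} {w₃ : FreeGroup (Fin d₃)}

lemma mem_coprimeWordProducts_one_sum_two (hw₁ : w₁ ≠ 1) (hw₂ : w₂ ≠ 1) (hw₃ : w₃ ≠ 1)
    (hp : IsCoprime (X - 1) p) {g : Matrix (Fin 1 ⊕ Fin 2) (Fin 1 ⊕ Fin 2) F} (hdet : g.det = 1)
    (hg : g ∉ Set.range (scalar (Fin 1 ⊕ Fin 2))) :
    g ∈ coprimeWordProducts w₁ w₂ w₃ p (Fin 1 ⊕ Fin 2) := by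
  obtain ⟨c, b, e, he, hge⟩ := exists_isConj_blockLDU_of_notMem_range_scalar (by simp) hg
    (hdet ▸ one_ne_zero) one_ne_zero
  refine mem_coprimeWordProducts_of_isConj ?_ hge.symm
  have hdet' : e.det = 1 := by simpa [det_eq_of_isConj hge, det_blockLDU] using hdet
  have hone : (1 : F) • (1 : Matrix (Fin 1) (Fin 1) F) = 1 * 1 * 1 := by simp
  rw [hone]
  refine blockLDU_mem_coprimeWordProducts (one_mem_coprimeWordMatrices hp)
    (one_mem_coprimeWordMatrices hp) (one_mem_coprimeWordMatrices hp) c b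
    (mem_coprimeWordProducts_fin_two hw₁ hw₂ hw₃ ?_ hdet' he)
  exact mul_ne_zero (ne_zero_of_isCoprime_X_sub_one hp)
    (mul_ne_zero (charpoly_monic 1).ne_zero (charpoly_monic 1).ne_zero)

lemma mem_coprimeWordProducts_one_sum_one_sum (hw₁ : w₁ ≠ 1) (hw₂ : w₂ ≠ 1) (hw₃ : w₃ ≠ 1)
    (hm : 1 < Fintype.card m)
    (ih : ∀ {q : F[X]} {e : Matrix m m F}, IsCoprime (X - 1) q → e.det = 1 →
      e ∉ Set.range (scalar m) → e ∈ coprimeWordProducts w₁ w₂ w₃ q m)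
    (hp : IsCoprime (X - 1) p) {g : Matrix (Fin 1 ⊕ (Fin 1 ⊕ m)) (Fin 1 ⊕ (Fin 1 ⊕ m)) F}
    (hdet : g.det = 1) (hg : g ∉ Set.range (scalar (Fin 1 ⊕ (Fin 1 ⊕ m)))) :
    g ∈ coprimeWordProducts w₁ w₂ w₃ p (Fin 1 ⊕ (Fin 1 ⊕ m)) := by
  obtain ⟨N, hN, a, c, b, e, ⟨hadet, ha⟩, ⟨hedet, he⟩, hNa⟩ :=
    exists_isConj_reindex_eq_blockLDU hm hg hdet
  refine mem_coprimeWordProducts_of_isConj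
    (mem_coprimeWordProducts_of_reindex (Equiv.sumAssoc _ _ _).symm ?_) hN.symm
  have ha' : a ∈ coprimeWordProducts w₁ w₂ w₃ (p * (X - 1)) (Fin 1 ⊕ Fin 1) :=
    mem_coprimeWordProducts_of_reindex finSumFinEquiv <|
      mem_coprimeWordProducts_fin_two hw₁ hw₂ hw₃
        (mul_ne_zero (ne_zero_of_isCoprime_X_sub_one hp) (X_sub_C_ne_zero 1))
        (by rw [det_reindex_self, hadet]) (mt (reindex_mem_range_scalar_iff _).1 ha)
  obtain ⟨_, ⟨x, hx, y, hy, rfl⟩, z, hz, rfl⟩ := ha'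
  rw [hNa]
  have hcop : IsCoprime (X - 1) (p * (x.charpoly * z.charpoly)) :=
    hp.mul_right (hx.2.of_mul_right_right.symm.mul_right hz.2.of_mul_right_right.symm)
  exact blockLDU_mem_coprimeWordProducts (coprimeWordMatrices_mul_right_subset hx)
    (coprimeWordMatrices_mul_right_subset hy) (coprimeWordMatrices_mul_right_subset hz) c b
    (ih hcop hedet he)

theorem mem_coprimeWordProducts (hw₁ : w₁ ≠ 1) (hw₂ : w₂ ≠ 1) (hw₃ : w₃ ≠ 1) :
    ∀ {n : ℕ} {p : F[X]} {g : Matrix (Fin n) (Fin n) F}, IsCoprime (X - 1) p → g.det = 1 →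
      g ∉ Set.range (scalar (Fin n)) → g ∈ coprimeWordProducts w₁ w₂ w₃ p (Fin n)
  | 0, _, g, _, _, hg => absurd (mem_range_scalar_of_subsingleton g) hg
  | 1, _, g, _, _, hg => absurd (mem_range_scalar_of_subsingleton g) hg
  | 2, _, _, hp, hdet, hg =>
    mem_coprimeWordProducts_fin_two hw₁ hw₂ hw₃ (ne_zero_of_isCoprime_X_sub_one hp) hdet hg
  | 3, _, _, hp, hdet, hg => by
    let e : Fin (1 + 2) ≃ Fin 1 ⊕ Fin 2 := finSumFinEquiv.symm
    exact mem_coprimeWordProducts_of_reindex e <|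
      mem_coprimeWordProducts_one_sum_two hw₁ hw₂ hw₃ hp
        (by rw [det_reindex_self, hdet]) (mt (reindex_mem_range_scalar_iff e).1 hg)
  | n + 4, _, _, hp, hdet, hg => by
    let e : Fin (n + 4) ≃ Fin 1 ⊕ (Fin 1 ⊕ Fin (n + 2)) :=
      Fintype.equivOfCardEq (by simp; lia)
    exact mem_coprimeWordProducts_of_reindex e <|
      mem_coprimeWordProducts_one_sum_one_sum hw₁ hw₂ hw₃ (by simp)
        (mem_coprimeWordProducts hw₁ hw₂ hw₃) hp
        (by rw [det_reindex_self, hdet]) (mt (reindex_mem_range_scalar_iff e).1 hg)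

end Main

section PSL

variable {F : Type*} [Field F] {n : ℕ}

lemma mk_eq_one_of_coe_mem_range_scalar {g : SpecialLinearGroup (Fin n) F}
    (hg : (g : Matrix (Fin n) (Fin n) F) ∈ Set.range (scalar (Fin n))) :
    (QuotientGroup.mk g : PSL n F) = 1 := by
  obtain ⟨r, hr⟩ := hg
  refine (QuotientGroup.eq_one_iff g).2 (Matrix.SpecialLinearGroup.mem_center_iff.2 ⟨r, ?_, hr⟩)
  rw [← g.det_coe, ← hr, scalar_apply, det_diagonal, Finset.prod_const, Finset.card_univ]

variable {d₁ d₂ d₃ : ℕ} {w₁ : FreeGroup (Fin d₁)} {w₂ : FreeGroup (Fin d₂)}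
  {w₃ : FreeGroup (Fin d₃)}

theorem psl_waring_three_general [Infinite F] (hw₁ : w₁ ≠ 1) (hw₂ : w₂ ≠ 1) (hw₃ : w₃ ≠ 1)
    (g : PSL n F) :
    ∃ g₁ ∈ wordValues w₁ (PSL n F), ∃ g₂ ∈ wordValues w₂ (PSL n F),
      ∃ g₃ ∈ wordValues w₃ (PSL n F), g = g₁ * g₂ * g₃ := by
  obtain ⟨g, rfl⟩ := QuotientGroup.mk_surjective g
  by_cases hg : (g : Matrix (Fin n) (Fin n) F) ∈ Set.range (scalar (Fin n))
  · refine ⟨1, one_mem_wordValues, 1, one_mem_wordValues, 1, one_mem_wordValues, ?_⟩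
    rw [mk_eq_one_of_coe_mem_range_scalar hg, mul_one, mul_one]
  · obtain ⟨_, ⟨_, ⟨⟨x, hx, rfl⟩, -⟩, _, ⟨⟨y, hy, rfl⟩, -⟩, rfl⟩, _, ⟨⟨z, hz, rfl⟩, -⟩, h⟩ :=
      mem_coprimeWordProducts hw₁ hw₂ hw₃ isCoprime_one_right g.det_coe hg
    obtain rfl : x * y * z = g := Subtype.ext h
    exact ⟨_, map_mem_wordValues (QuotientGroup.mk' _) hx, _, map_mem_wordValues
      (QuotientGroup.mk' _) hy, _, map_mem_wordValues (QuotientGroup.mk' _) hz, rfl⟩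

end PSL

/-- If `F` is an infinite field, `n ≥ 3`, and `w₁, w₂, w₃` are nontrivial words, then
`PSL_n(F) = w₁(PSL_n(F)) · w₂(PSL_n(F)) · w₃(PSL_n(F))`. -/
theorem psl_waring_three {F : Type*} [Field F] [Infinite F]
    (n : ℕ) (hn : 3 ≤ n) {d₁ d₂ d₃ : ℕ}
    (w₁ : FreeGroup (Fin d₁)) (w₂ : FreeGroup (Fin d₂)) (w₃ : FreeGroup (Fin d₃))
    (hw₁ : w₁ ≠ 1) (hw₂ : w₂ ≠ 1) (hw₃ : w₃ ≠ 1) :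
    ∀ g : PSL n F,
      ∃ g₁ ∈ wordValues w₁ (PSL n F), ∃ g₂ ∈ wordValues w₂ (PSL n F),
        ∃ g₃ ∈ wordValues w₃ (PSL n F), g = g₁ * g₂ * g₃ :=
  psl_waring_three_general hw₁ hw₂ hw₃
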